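/- arXiv:2103.14603 — 3 statements merged into one kernel-verified Lean document; each statement's English description precedes it below -/
import Mathlib

section
/- Let X be a type and J : X → X → ℝ a quasi-pseudometric. Let δ > 0 and 0 < ε < δ/2, let V ⊆ X be a finite set such that no pair v, w ∈ V satisfies δ < J v w ≤ δ + ε, and let s₁, s₂ ∈ X with J s₁ s₂ ≤ ε. If v₁, v₂ ∈ V satisfy max (J v₁ s₁) (J s₁ v₁) ≤ δ/2 and max (J v₂ s₂) (J s₂ v₂) ≤ δ/2, then J v₁ v₂ ≤ δ; consequently v₁ and v₂ are connected by an edge in the graph that connects all vertex pairs of cost at most δ. -/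
section CostEdges

variable {X M : Type*} {J : X → X → M} {V : Set X}

/-- The edge set `E` of the motion-primitive graph `G(V, E)` at cost threshold `δ`. Edges are
ordered pairs, since `J` need not be symmetric, and loops are allowed. -/
def costEdges [LE M] (J : X → X → M) (V : Set X) (δ : M) : Set (X × X) :=
  {p | p.1 ∈ V ∧ p.2 ∈ V ∧ J p.1 p.2 ≤ δ}

lemma costEdges_subset_of_forall_notMem_Ioc [LinearOrder M] {δ η : M}
    (hgap : ∀ v ∈ V, ∀ w ∈ V, J v w ∉ Set.Ioc δ η) :
    costEdges J V η ⊆ costEdges J V δ := by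
  rintro ⟨v, w⟩ ⟨hv, hw, hη⟩
  exact ⟨hv, hw, not_lt.mp fun hδ ↦ hgap v hv w hw ⟨hδ, hη⟩⟩

lemma le_add_add_of_triangle [Add M] [Preorder M] [AddLeftMono M] [AddRightMono M]
    (htri : ∀ x y z, J x z ≤ J x y + J y z) {w x y z : X} {a b c : M}
    (hwx : J w x ≤ a) (hxy : J x y ≤ b) (hyz : J y z ≤ c) :
    J w z ≤ a + b + c :=
  calc
    J w z ≤ J w y + J y z := htri w y z
    _ ≤ J w x + J x y + J y z := by gcongr; exact htri w x y
    _ ≤ a + b + c := by gcongr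

theorem consecutive_vertices_edge_general
    [Add M] [LinearOrder M] [AddLeftMono M] [AddRightMono M]
    (htri : ∀ x y z, J x z ≤ J x y + J y z) {δ ε η r₁ r₂ : M}
    (hgap : ∀ v ∈ V, ∀ w ∈ V, J v w ∉ Set.Ioc δ η) (hη : r₁ + ε + r₂ ≤ η)
    {s₁ s₂ v₁ v₂ : X} (hv₁ : v₁ ∈ V) (hv₂ : v₂ ∈ V)
    (h₁ : J v₁ s₁ ≤ r₁) (h₁₂ : J s₁ s₂ ≤ ε) (h₂ : J s₂ v₂ ≤ r₂) :
    (v₁, v₂) ∈ costEdges J V δ :=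
  costEdges_subset_of_forall_notMem_Ioc hgap
    ⟨hv₁, hv₂, (le_add_add_of_triangle htri h₁ h₁₂ h₂).trans hη⟩

end CostEdges

/-- combining the gap lemma with the triangle-inequality chain,
nearby vertices of consecutive plan states are joined by a graph edge. -/
theorem consecutive_vertices_edge {X : Type*} (J : X → X → ℝ)
    (hrefl : ∀ x, J x x = 0)
    (hnonneg : ∀ x y, 0 ≤ J x y)
    (htri : ∀ x y z, J x z ≤ J x y + J y z)
    (δ ε : ℝ) (hδ : 0 < δ) (hε : 0 < ε) (hεδ : ε < δ / 2)
    (V : Finset X)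
    (hgap : ∀ v ∈ V, ∀ w ∈ V, ¬ (δ < J v w ∧ J v w ≤ δ + ε))
    (s₁ s₂ : X) (h12 : J s₁ s₂ ≤ ε)
    (v₁ v₂ : X) (hv₁ : v₁ ∈ V) (hv₂ : v₂ ∈ V)
    (h1 : max (J v₁ s₁) (J s₁ v₁) ≤ δ / 2)
    (h2 : max (J v₂ s₂) (J s₂ v₂) ≤ δ / 2) :
    J v₁ v₂ ≤ δ ∧
      (v₁, v₂) ∈ {p : X × X | p.1 ∈ V ∧ p.2 ∈ V ∧ J p.1 p.2 ≤ δ} := by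
  have hedge : (v₁, v₂) ∈ costEdges J V δ :=
    consecutive_vertices_edge_general htri hgap (by linarith : δ / 2 + ε + δ / 2 ≤ δ + ε)
      hv₁ hv₂ (le_of_max_le_left h1) h12 (le_of_max_le_right h2)
  exact ⟨hedge.2.2, hedge⟩
end

section
/- (Theorem 1, completeness.) Let X be a type, J : X → X → ℝ a quasi-pseudometric, and free ⊆ X. Let δ > 0 and 0 < ε < δ/2. Let V ⊆ X be a finite set with dispersion at most δ/2 over free, i.e. for every x ∈ free there exists v ∈ V with max (J x v) (J v x) ≤ δ/2, and suppose no pair v, w ∈ V satisfies δ < J v w ≤ δ + ε. Let n ≥ 1 and let s : Fin (n+1) → X be a discretized motion plan with s 0 = x_start and s n = x_goal, such that J (s i) (s (i+1)) ≤ ε for every i < n, and with clearance δ: for every i, { y | J (s i) y ≤ δ } ⊆ free and { y | J y (s i) ≤ δ } ⊆ free. Then there exists a vertex sequence v : Fin (n+1) → X with v i ∈ V for all i, such that J x_start (v 0) ≤ δ, J (v n) x_goal ≤ δ, J (v i) (v (i+1)) ≤ δ for every i < n (so consecutive vertices are joined by graph edges), and v i ∈ free for every i. Hence graph search over the edge set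 { (v, w) ∈ V × V | J v w ≤ δ } with the stated accessibility and departability connections finds a path from x_start to x_goal. -/
/-!
Each waypoint of the plan lies in free space, so some vertex is within symmetrized cost `δ / 2` of
it. Going from one such vertex back to its waypoint, along the plan and on to the next vertex costs
at most `δ + ε`. The gap property excludes costs in `(δ, δ + ε]`, which absorbs the excess `ε` and
makes the two vertices adjacent.
-/

section DirectedCost

variable {X M : Type*}

/-- The symmetrization `J̄` of a directed cost `J`, in which dispersion is measured. -/
def symmCost [LinearOrder M] (J : X → X → M) (x y : X) : M :=
  max (J x y) (J y x)

/-- The forward reachable set `R(x, j)`: the states that can be reached from `x` at cost at most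
`j`. -/
def forwardReachable [LE M] (J : X → X → M) (x : X) (j : M) : Set X :=
  {y | J x y ≤ j}

/-- The dispersion of `V` over `free` is at most `r`. The bound is stated pointwise with an attained
witness, which avoids the default values of `⨆` and `⨅`. -/
def HasDispersionLE [LinearOrder M] (J : X → X → M) (free V : Set X) (r : M) : Prop :=
  ∀ x ∈ free, ∃ v ∈ V, symmCost J x v ≤ r

theorem symmCost_le_iff [LinearOrder M] {J : X → X → M} {x y : X} {r : M} :
    symmCost J x y ≤ r ↔ J x y ≤ r ∧ J y x ≤ r :=
  max_le_iff

theorem self_mem_forwardReachable [Preorder M] [Zero M] {J : X → X → M} {x : X}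
    {j : M} (hrefl : J x x = 0) (hj : 0 ≤ j) : x ∈ forwardReachable J x j :=
  hrefl.trans_le hj

theorem cost_le_add_add [Preorder M] [AddCommMonoid M] [IsOrderedAddMonoid M]
    {J : X → X → M} (htri : ∀ x y z, J x z ≤ J x y + J y z)
    {v x y w : X} {a b c : M} (hvx : J v x ≤ a) (hxy : J x y ≤ b) (hyw : J y w ≤ c) :
    J v w ≤ a + b + c :=
  calc
    J v w ≤ J v y + J y w := htri v y w
    _ ≤ J v x + J x y + J y w := by gcongr; exact htri v x y
    _ ≤ a + b + c := by gcongr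

variable [LinearOrder M] [AddCommMonoid M] [IsOrderedAddMonoid M]

theorem cost_le_of_symmCost_le_of_notMem_Ioc {J : X → X → M}
    (htri : ∀ x y z, J x z ≤ J x y + J y z) {x y v w : X} {r δ ε : M} (hrδ : r + r ≤ δ)
    (hxv : symmCost J x v ≤ r) (hyw : symmCost J y w ≤ r) (hxy : J x y ≤ ε)
    (hgap : J v w ∉ Set.Ioc δ (δ + ε)) : J v w ≤ δ := by
  have hle : J v w ≤ δ + ε :=
    calc
      J v w ≤ r + ε + r :=
        cost_le_add_add htri (symmCost_le_iff.mp hxv).2 hxy (symmCost_le_iff.mp hyw).1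
      _ = r + r + ε := add_right_comm r ε r
      _ ≤ δ + ε := by gcongr
  exact not_lt.mp fun hlt => hgap ⟨hlt, hle⟩

theorem graph_search_complete_general {ι : Type*} {J : X → X → M} (hrefl : ∀ x, J x x = 0)
    (htri : ∀ x y z, J x z ≤ J x y + J y z) {free V : Set X} {r δ ε : M} (hr : 0 ≤ r)
    (hrδ : r + r ≤ δ) (hdisp : HasDispersionLE J free V r)
    (hgap : ∀ v ∈ V, ∀ w ∈ V, J v w ∉ Set.Ioc δ (δ + ε)) {s : ι → X}
    (hclear : ∀ i, forwardReachable J (s i) δ ⊆ free) :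
    ∃ v : ι → X,
      (∀ i, v i ∈ V) ∧
      (∀ i, symmCost J (s i) (v i) ≤ δ) ∧
      (∀ i j, J (s i) (s j) ≤ ε → J (v i) (v j) ≤ δ) ∧
      (∀ i, v i ∈ free) := by
  have hle : r ≤ δ := (le_add_of_nonneg_right hr).trans hrδ
  have hsfree (i : ι) : s i ∈ free :=
    hclear i (self_mem_forwardReachable (hrefl (s i)) (hr.trans hle))
  choose v hvV hsv using fun i => hdisp (s i) (hsfree i)
  have hsvδ (i : ι) : symmCost J (s i) (v i) ≤ δ := (hsv i).trans hle
  have hedge (i j : ι) (hij : J (s i) (s j) ≤ ε) : J (v i) (v j) ≤ δ :=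
    cost_le_of_symmCost_le_of_notMem_Ioc htri hrδ (hsv i) (hsv j) hij
      (hgap (v i) (hvV i) (v j) (hvV j))
  exact ⟨v, hvV, hsvδ, hedge, fun i => hclear i (symmCost_le_iff.mp (hsvδ i)).1⟩

end DirectedCost

/-- Theorem 1, completeness: given a discretized clearance-δ
motion plan and a vertex set of dispersion at most δ/2 over free space with
the gap property, there is a vertex sequence in free space whose consecutive
vertices (and the start/goal connections) have cost at most δ, hence a path
through the motion-primitive graph. -/
theorem graph_search_complete {X : Type*} (J : X → X → ℝ)
    (hrefl : ∀ x, J x x = 0)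
    (hnonneg : ∀ x y, 0 ≤ J x y)
    (htri : ∀ x y z, J x z ≤ J x y + J y z)
    (free : Set X)
    (δ ε : ℝ) (hδ : 0 < δ) (hε : 0 < ε) (hεδ : ε < δ / 2)
    (V : Finset X)
    (hdisp : ∀ x ∈ free, ∃ v ∈ V, max (J x v) (J v x) ≤ δ / 2)
    (hgap : ∀ v ∈ V, ∀ w ∈ V, ¬ (δ < J v w ∧ J v w ≤ δ + ε))
    (n : ℕ) (hn : 1 ≤ n)
    (s : Fin (n + 1) → X) (x_start x_goal : X)
    (hstart : s 0 = x_start) (hgoal : s (Fin.last n) = x_goal)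
    (hstep : ∀ i : Fin n, J (s i.castSucc) (s i.succ) ≤ ε)
    (hclear_fwd : ∀ i : Fin (n + 1), {y : X | J (s i) y ≤ δ} ⊆ free)
    (hclear_bwd : ∀ i : Fin (n + 1), {y : X | J y (s i) ≤ δ} ⊆ free) :
    ∃ v : Fin (n + 1) → X,
      (∀ i, v i ∈ V) ∧
      J x_start (v 0) ≤ δ ∧
      J (v (Fin.last n)) x_goal ≤ δ ∧
      (∀ i : Fin n, J (v i.castSucc) (v i.succ) ≤ δ) ∧
      (∀ i, v i ∈ free) := by
  obtain ⟨v, hvV, hsv, hedge, hvfree⟩ := graph_search_complete_general (V := (V : Set X))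
    hrefl htri (half_pos hδ).le (add_halves δ).le hdisp hgap hclear_fwd
  exact ⟨v, hvV, hstart ▸ (symmCost_le_iff.mp (hsv 0)).1,
    hgoal ▸ (symmCost_le_iff.mp (hsv (Fin.last n))).2, fun i => hedge _ _ (hstep i), hvfree⟩
end

section
/- Let X be a type, J : X → X → ℝ a quasi-pseudometric, d ≥ 0, n ≥ 1, and s, v : Fin (n+1) → X with max (J (v i) (s i)) (J (s i) (v i)) ≤ d for every i. Then the total cost of the vertex path is bounded by the total cost of the discretized plan plus 2nd: ∑_{i < n} J (v i) (v (i+1)) ≤ (∑_{i < n} J (s i) (s (i+1))) + 2 * n * d. In particular, as the dispersion d tends to zero, the cost of the path found through the graph tends to the cost of the discretized optimal plan. -/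
section TriangleInequality

variable {X M : Type*} [AddCommMonoid M] [Preorder M] [IsOrderedAddMonoid M] {J : X → X → M}

theorem cost_triangle4 (htri : ∀ x y z, J x z ≤ J x y + J y z) (w x y z : X) :
    J w z ≤ J w x + J x y + J y z :=
  (htri w y z).trans <| add_le_add_left (htri w x y) _

theorem path_cost_le_add_sum_deviations (htri : ∀ x y z, J x z ≤ J x y + J y z) {n : ℕ}
    (s v : Fin (n + 1) → X) :
    ∑ i : Fin n, J (v i.castSucc) (v i.succ) ≤
      (∑ i : Fin n, J (s i.castSucc) (s i.succ)) +
        ∑ i : Fin n, (J (v i.castSucc) (s i.castSucc) + J (s i.succ) (v i.succ)) := by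
  rw [← Finset.sum_add_distrib]
  refine Finset.sum_le_sum fun i _ => ?_
  calc J (v i.castSucc) (v i.succ)
      ≤ J (v i.castSucc) (s i.castSucc) + J (s i.castSucc) (s i.succ) +
          J (s i.succ) (v i.succ) :=
        cost_triangle4 htri _ _ _ _
    _ = J (s i.castSucc) (s i.succ) +
          (J (v i.castSucc) (s i.castSucc) + J (s i.succ) (v i.succ)) := by
        ac_rfl

theorem vertex_path_cost_bound_general (htri : ∀ x y z, J x z ≤ J x y + J y z) {n : ℕ}
    {s v : Fin (n + 1) → X} {d e : M} (hvs : ∀ i, J (v i) (s i) ≤ d)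
    (hsv : ∀ i, J (s i) (v i) ≤ e) :
    ∑ i : Fin n, J (v i.castSucc) (v i.succ) ≤
      (∑ i : Fin n, J (s i.castSucc) (s i.succ)) + n • (d + e) := by
  have sum_deviations_le :
      ∑ i : Fin n, (J (v i.castSucc) (s i.castSucc) + J (s i.succ) (v i.succ)) ≤ n • (d + e) :=
    calc ∑ i : Fin n, (J (v i.castSucc) (s i.castSucc) + J (s i.succ) (v i.succ))
        ≤ ∑ _i : Fin n, (d + e) :=
          Finset.sum_le_sum fun i _ => add_le_add (hvs i.castSucc) (hsv i.succ)
      _ = n • (d + e) := Fin.sum_const n (d + e)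
  exact (path_cost_le_add_sum_deviations htri s v).trans <| add_le_add_right sum_deviations_le _

end TriangleInequality

/-- the total cost of the vertex path exceeds the total cost of
the discretized plan by at most `2 * n * d`; as the dispersion `d → 0` the
graph path cost tends to the optimal plan cost. -/
theorem vertex_path_cost_bound {X : Type*} (J : X → X → ℝ)
    (hrefl : ∀ x, J x x = 0)
    (hnonneg : ∀ x y, 0 ≤ J x y)
    (htri : ∀ x y z, J x z ≤ J x y + J y z)
    (d : ℝ) (hd : 0 ≤ d)
    (n : ℕ) (hn : 1 ≤ n)
    (s v : Fin (n + 1) → X)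
    (hclose : ∀ i, max (J (v i) (s i)) (J (s i) (v i)) ≤ d) :
    ∑ i : Fin n, J (v i.castSucc) (v i.succ) ≤
      (∑ i : Fin n, J (s i.castSucc) (s i.succ)) + 2 * n * d := by
  have cost_le := vertex_path_cost_bound_general htri
    (fun i => (le_max_left _ _).trans (hclose i)) (fun i => (le_max_right _ _).trans (hclose i))
  rwa [nsmul_eq_mul, ← two_mul, mul_left_comm, ← mul_assoc] at cost_le
end
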